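/- Let (c₁,B₁),…,(cₘ,Bₘ) be a Brascamp–Lieb datum on ℝⁿ satisfying the frame condition: Bᵢ Bᵢ* = id_{ℝ^{nᵢ}} for every i, and Σᵢ cᵢ Bᵢ* Bᵢ = id_{ℝⁿ}. Then for every collection of nonnegative integrable functions fᵢ : ℝ^{nᵢ} → ℝ one has ∫_{ℝⁿ} ∏ᵢ (fᵢ(Bᵢx))^{cᵢ} dx ≤ ∏ᵢ (∫_{ℝ^{nᵢ}} fᵢ dx)^{cᵢ}, i.e. the Brascamp–Lieb inequality holds with constant 1. -/

import Mathlib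

open MeasureTheory Matrix

/-!
For `u ≥ δ > 0` of class `C^{1,1}`, the logarithm of the average of `u` against a Gaussian of small
variance `σ²` is the average of `log u` plus `½σ²‖∇ log u‖²`, up to `O(σ³)` (second-order cumulant
expansion). For `log ∏ᵢ uᵢ(Bᵢ x)^{cᵢ} = ∑ᵢ cᵢ log uᵢ(Bᵢ x)` the averages of the logarithms add up,
and the gradient terms compare through `‖∑ cᵢ Bᵢ* vᵢ‖² ≤ ∑ cᵢ ‖vᵢ‖²`, the dual form of the frame
condition. So averaging the product exceeds the product of the averages by a factor of at most `exp
(O(σ³))`, and since `N` steps with `σ = N^(-1/2)` make up the standard Gaussian, `N → ∞` gives the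
inequality for the Gaussian measure. Density and Fatou's lemma remove the regularity assumption. The
frame condition also gives `∏ᵢ ρ(Bᵢ x)^{cᵢ} = ρ(x)` for the standard Gaussian densities `ρ`, so the
Lebesgue inequality for `fᵢ` is the Gaussian one for `fᵢ / ρ`.
-/

namespace BrascampLieb

open ProbabilityTheory Filter
open scoped NNReal ENNReal Topology ContDiff InnerProduct

section Scalar

lemma abs_exp_sub_quadratic_le (y : ℝ) :
    |Real.exp y - 1 - y - y ^ 2 / 2| ≤ |y| ^ 3 * Real.exp |y| := by
  have h := Complex.norm_exp_sub_sum_le_norm_mul_exp y 3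
  have hsum : Complex.exp y - ∑ m ∈ Finset.range 3, (y : ℂ) ^ m / (m.factorial : ℂ)
      = ((Real.exp y - 1 - y - y ^ 2 / 2 : ℝ) : ℂ) := by
    simp only [Finset.sum_range_succ, Finset.sum_range_zero, Nat.factorial]
    push_cast
    ring
  rwa [hsum, Complex.norm_real, Complex.norm_real] at h

lemma abs_inv_sub_inv_le {a b δ : ℝ} (hδ : 0 < δ) (ha : δ ≤ a) (hb : δ ≤ b) :
    |a⁻¹ - b⁻¹| ≤ δ⁻¹ * |a - b| * δ⁻¹ := by
  have ha₀ : 0 < a := hδ.trans_le ha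
  have hb₀ : 0 < b := hδ.trans_le hb
  rw [inv_sub_inv' ha₀.ne' hb₀.ne', abs_mul, abs_mul, abs_of_pos (inv_pos.2 ha₀),
    abs_of_pos (inv_pos.2 hb₀), abs_sub_comm]
  gcongr

lemma abs_log_sub_sub_one_le {κ s : ℝ} (hκ : 0 < κ) (hs : κ ≤ s) :
    |Real.log s - (s - 1)| ≤ (s - 1) ^ 2 / κ := by
  have hs0 : 0 < s := hκ.trans_le hs
  have hupper := Real.log_le_sub_one_of_pos hs0
  have hlower := Real.one_sub_inv_le_log_of_pos hs0
  rw [abs_of_nonpos (by linarith)]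
  calc -(Real.log s - (s - 1)) ≤ s - 1 - (1 - s⁻¹) := by linarith
    _ = (s - 1) ^ 2 / s := by field_simp
    _ ≤ (s - 1) ^ 2 / κ := by gcongr

lemma abs_exp_sub_quadratic_le_of_approx {y ℓ A B : ℝ} (hA : 0 ≤ A) (hy : |y| ≤ A) (hℓ : |ℓ| ≤ A)
    (hyℓ : |y - ℓ| ≤ B) :
    |Real.exp y - 1 - y - ℓ ^ 2 / 2| ≤ A ^ 3 * Real.exp A + A * B := by
  have hsq : |y ^ 2 / 2 - ℓ ^ 2 / 2| ≤ A * B := by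
    calc |y ^ 2 / 2 - ℓ ^ 2 / 2| = |y + ℓ| / 2 * |y - ℓ| := by
          rw [show y ^ 2 / 2 - ℓ ^ 2 / 2 = (y + ℓ) / 2 * (y - ℓ) by ring, abs_mul, abs_div, abs_two]
      _ ≤ A * B := by
          gcongr
          linarith [abs_add_le y ℓ]
  calc |Real.exp y - 1 - y - ℓ ^ 2 / 2|
      ≤ |Real.exp y - 1 - y - y ^ 2 / 2| + |y ^ 2 / 2 - ℓ ^ 2 / 2| := by
        simpa using abs_sub_le (Real.exp y - 1 - y) (y ^ 2 / 2) (ℓ ^ 2 / 2)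
    _ ≤ A ^ 3 * Real.exp A + A * B :=
        add_le_add ((abs_exp_sub_quadratic_le y).trans (by gcongr)) hsq

lemma abs_log_sub_le_cubic {s t σ κ D M : ℝ} (hκ : 0 < κ) (hM : 0 ≤ M)
    (hσ : σ ∈ Set.Icc (0 : ℝ) 1) (hs : κ ≤ s) (ht : |t| ≤ D * σ ^ 2)
    (hst : |s - 1 - t| ≤ M * σ ^ 3) :
    |Real.log s - t| ≤ (M + (D + M) ^ 2 / κ) * σ ^ 3 := by
  have hσ₀ := hσ.1
  have hsub : |s - 1| ≤ (D + M) * σ ^ 2 := by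
    calc |s - 1| ≤ |s - 1 - t| + |t| := by simpa using abs_add_le (s - 1 - t) t
      _ ≤ M * σ ^ 3 + D * σ ^ 2 := add_le_add hst ht
      _ ≤ M * σ ^ 2 + D * σ ^ 2 := by
          gcongr ?_ + _
          exact mul_le_mul_of_nonneg_left (pow_le_pow_of_le_one hσ₀ hσ.2 (by norm_num)) hM
      _ = (D + M) * σ ^ 2 := by ring
  have hlog : |Real.log s - (s - 1)| ≤ (D + M) ^ 2 / κ * σ ^ 3 := by
    calc |Real.log s - (s - 1)| ≤ (s - 1) ^ 2 / κ := abs_log_sub_sub_one_le hκ hs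
      _ ≤ ((D + M) * σ ^ 2) ^ 2 / κ := by
          gcongr ?_ / κ
          exact sq_le_sq' (neg_le_of_abs_le hsub) (le_of_abs_le hsub)
      _ = (D + M) ^ 2 / κ * σ ^ 4 := by ring
      _ ≤ (D + M) ^ 2 / κ * σ ^ 3 :=
          mul_le_mul_of_nonneg_left (pow_le_pow_of_le_one hσ₀ hσ.2 (by norm_num)) (by positivity)
  calc |Real.log s - t| = |(Real.log s - (s - 1)) + (s - 1 - t)| := by ring_nf
    _ ≤ (D + M) ^ 2 / κ * σ ^ 3 + M * σ ^ 3 := (abs_add_le _ _).trans (add_le_add hlog hst)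
    _ = (M + (D + M) ^ 2 / κ) * σ ^ 3 := by ring

lemma abs_sqrt_sq_add_sq_sub_le {a g ε : ℝ} (hg : 0 ≤ g) (hε : 0 ≤ ε) :
    |√(a ^ 2 + ε ^ 2) - g| ≤ |a - g| + ε := by
  have hlower : |a| ≤ √(a ^ 2 + ε ^ 2) := Real.abs_le_sqrt (by nlinarith)
  have hupper : √(a ^ 2 + ε ^ 2) ≤ |a| + ε :=
    Real.sqrt_le_iff.2 ⟨by positivity, by nlinarith [sq_abs a, mul_nonneg (abs_nonneg a) hε]⟩
  have htriangle := abs_le.1 (abs_abs_sub_abs_le_abs_sub a g)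
  rw [abs_of_nonneg hg] at htriangle
  exact abs_le.2 ⟨by linarith, by linarith⟩

end Scalar

section C11

variable {E : Type*} [NormedAddCommGroup E] [NormedSpace ℝ E]

/-- `u` is of class `C^{1,1}`, and `K` is a Lipschitz constant both for `u` and for its derivative.
One constant controls both so that a uniform bound on a family of functions is a single number. -/
structure IsC11With (K : ℝ≥0) (u : E → ℝ) : Prop where
  differentiable : Differentiable ℝ u
  lipschitzWith : LipschitzWith K u
  lipschitzWith_fderiv : LipschitzWith K (fderiv ℝ u)

lemma lipschitzWith_sum_smul {X G ι : Type*} [PseudoMetricSpace X] [SeminormedAddCommGroup G]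
    [NormedSpace ℝ G] [Fintype ι] (c : ι → ℝ) {K : ι → ℝ≥0} {f : ι → X → G}
    (hf : ∀ i, LipschitzWith (K i) (f i)) :
    LipschitzWith (∑ i, ‖c i‖₊ * K i) fun x => ∑ i, c i • f i x := by
  refine LipschitzWith.of_dist_le_mul fun x y => ?_
  push_cast
  rw [Finset.sum_mul]
  refine dist_sum_sum_le_of_le _ fun i _ => ?_
  rw [dist_smul₀, mul_assoc]
  exact mul_le_mul_of_nonneg_left ((hf i).dist_le_mul x y) (norm_nonneg _)

lemma hasFDerivAt_sum_mul_comp {ι : Type*} [Fintype ι] {F : ι → Type*}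
    [∀ i, NormedAddCommGroup (F i)] [∀ i, NormedSpace ℝ (F i)] (c : ι → ℝ) (B : ∀ i, E →L[ℝ] F i)
    {φ : ∀ i, F i → ℝ} (hφ : ∀ i, Differentiable ℝ (φ i)) (x : E) :
    HasFDerivAt (fun x => ∑ i, c i * φ i (B i x))
      (∑ i, c i • (fderiv ℝ (φ i) (B i x)).comp (B i)) x :=
  HasFDerivAt.fun_sum fun i _ =>
    (((hφ i (B i x)).hasFDerivAt.comp x (B i).hasFDerivAt).const_mul (c i))

namespace IsC11With

variable {K : ℝ≥0} {u φ : E → ℝ}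

lemma norm_fderiv_le (hu : IsC11With K u) (x : E) : ‖fderiv ℝ u x‖ ≤ K :=
  norm_fderiv_le_of_lipschitz ℝ hu.lipschitzWith

lemma mono {K' : ℝ≥0} (hu : IsC11With K u) (hK : K ≤ K') : IsC11With K' u :=
  ⟨hu.differentiable, hu.lipschitzWith.weaken hK, hu.lipschitzWith_fderiv.weaken hK⟩

lemma abs_sub_sub_fderiv_le (hu : IsC11With K u) (x h : E) :
    |u (x + h) - u x - fderiv ℝ u x h| ≤ K * ‖h‖ ^ 2 := by
  have hfderiv : ∀ y ∈ Metric.closedBall x ‖h‖, ‖fderiv ℝ u y - fderiv ℝ u x‖ ≤ K * ‖h‖ := by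
    intro y hy
    rw [← dist_eq_norm]
    exact (hu.lipschitzWith_fderiv.dist_le_mul y x).trans
      (mul_le_mul_of_nonneg_left (Metric.mem_closedBall.1 hy) K.coe_nonneg)
  have hmvt := (convex_closedBall x ‖h‖).norm_image_sub_le_of_norm_fderiv_le'
    (fun y _ => hu.differentiable y) hfderiv (Metric.mem_closedBall_self (norm_nonneg h))
    (show x + h ∈ Metric.closedBall x ‖h‖ by simp)
  rwa [add_sub_cancel_left, mul_assoc, ← sq] at hmvt

lemma log {δ : ℝ≥0} (hu : IsC11With K u) (hδ : 0 < δ) (hlow : ∀ x, δ ≤ u x) :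
    IsC11With (K / δ + (K / δ) ^ 2) fun x => Real.log (u x) := by
  have hpos : ∀ x, 0 < u x := fun x => (NNReal.coe_pos.2 hδ).trans_le (hlow x)
  have hfderiv : ∀ x, fderiv ℝ (fun x => Real.log (u x)) x = (u x)⁻¹ • fderiv ℝ u x := fun x =>
    ((hu.differentiable x).hasFDerivAt.log (hpos x).ne').fderiv
  have hdiff : Differentiable ℝ fun x => Real.log (u x) := fun x =>
    (hu.differentiable x).log (hpos x).ne'
  refine ⟨hdiff, lipschitzWith_of_nnnorm_fderiv_le (𝕜 := ℝ) hdiff fun x => ?_,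
    LipschitzWith.of_dist_le_mul fun x y => ?_⟩
  · rw [← NNReal.coe_le_coe, hfderiv, coe_nnnorm, norm_smul, norm_inv,
      Real.norm_of_nonneg (hpos x).le]
    push_cast
    calc (u x)⁻¹ * ‖fderiv ℝ u x‖ ≤ (δ : ℝ)⁻¹ * K := by
          gcongr
          exacts [hlow x, hu.norm_fderiv_le x]
      _ ≤ K / δ + (K / δ : ℝ) ^ 2 := by
          rw [inv_mul_eq_div]
          exact le_add_of_nonneg_right (sq_nonneg _)
  · have hinv_sub : |(u x)⁻¹ - (u y)⁻¹| ≤ (δ : ℝ)⁻¹ * (K * dist x y) * (δ : ℝ)⁻¹ := by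
      refine (abs_inv_sub_inv_le (NNReal.coe_pos.2 hδ) (hlow x) (hlow y)).trans ?_
      gcongr
      exact hu.lipschitzWith.dist_le_mul x y
    have hsplit : (u x)⁻¹ • fderiv ℝ u x - (u y)⁻¹ • fderiv ℝ u y
        = (u x)⁻¹ • (fderiv ℝ u x - fderiv ℝ u y) + ((u x)⁻¹ - (u y)⁻¹) • fderiv ℝ u y := by
      module
    rw [hfderiv, hfderiv, dist_eq_norm, hsplit]
    push_cast
    calc ‖(u x)⁻¹ • (fderiv ℝ u x - fderiv ℝ u y) + ((u x)⁻¹ - (u y)⁻¹) • fderiv ℝ u y‖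
        ≤ (u x)⁻¹ * ‖fderiv ℝ u x - fderiv ℝ u y‖ + |(u x)⁻¹ - (u y)⁻¹| * ‖fderiv ℝ u y‖ := by
          refine (norm_add_le _ _).trans_eq ?_
          rw [norm_smul, norm_smul, norm_inv, Real.norm_of_nonneg (hpos x).le, Real.norm_eq_abs]
      _ ≤ (δ : ℝ)⁻¹ * (K * dist x y) + (δ : ℝ)⁻¹ * (K * dist x y) * (δ : ℝ)⁻¹ * K := by
          gcongr
          · exact hlow x
          · rw [← dist_eq_norm]
            exact hu.lipschitzWith_fderiv.dist_le_mul x y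
          · exact hu.norm_fderiv_le y
      _ = (K / δ + (K / δ) ^ 2) * dist x y := by ring

lemma sum_mul_comp {ι : Type*} [Fintype ι] {F : ι → Type*} [∀ i, NormedAddCommGroup (F i)]
    [∀ i, NormedSpace ℝ (F i)] (c : ι → ℝ) {B : ∀ i, E →L[ℝ] F i} (hB : ∀ i, ‖B i‖ ≤ 1)
    {φ : ∀ i, F i → ℝ} (hφ : ∀ i, IsC11With K (φ i)) :
    IsC11With (∑ i, ‖c i‖₊ * K) fun x => ∑ i, c i * φ i (B i x) := by
  have hasFDerivAt := hasFDerivAt_sum_mul_comp c B fun i => (hφ i).differentiable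
  have hBlip : ∀ i, LipschitzWith 1 (B i) := fun i => (B i).lipschitz.weaken (hB i)
  refine ⟨fun x => (hasFDerivAt x).differentiableAt,
    lipschitzWith_sum_smul c fun i => ?_, ?_⟩
  · exact mul_one K ▸ (hφ i).lipschitzWith.comp (hBlip i)
  · rw [funext fun x => (hasFDerivAt x).fderiv]
    refine lipschitzWith_sum_smul c fun i => LipschitzWith.of_dist_le_mul fun x y => ?_
    rw [dist_eq_norm, ← ContinuousLinearMap.sub_comp]
    calc ‖(fderiv ℝ (φ i) (B i x) - fderiv ℝ (φ i) (B i y)).comp (B i)‖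
        ≤ ‖fderiv ℝ (φ i) (B i x) - fderiv ℝ (φ i) (B i y)‖ :=
          (ContinuousLinearMap.opNorm_comp_le _ _).trans
            (mul_le_of_le_one_right (norm_nonneg _) (hB i))
      _ ≤ K * dist x y := by
          rw [← dist_eq_norm]
          simpa using ((hφ i).lipschitzWith_fderiv.comp (hBlip i)).dist_le_mul x y

lemma sub_const (hφ : IsC11With K φ) (a : ℝ) : IsC11With K fun x => φ x - a where
  differentiable := hφ.differentiable.sub_const a
  lipschitzWith := LipschitzWith.of_dist_le_mul fun x y => by
    simpa using hφ.lipschitzWith.dist_le_mul x y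
  lipschitzWith_fderiv := by
    rw [show fderiv ℝ (fun x => φ x - a) = fderiv ℝ φ from funext fun x => fderiv_sub_const a]
    exact hφ.lipschitzWith_fderiv

lemma abs_add_smul_le (hφ : IsC11With K φ) {x : E} (hx : φ x = 0) {σ : ℝ} (hσ : 0 ≤ σ) (z : E) :
    |φ (x + σ • z)| ≤ K * σ * ‖z‖ := by
  simpa [Real.dist_eq, norm_smul, abs_of_nonneg hσ, mul_assoc, hx] using
    hφ.lipschitzWith.dist_le_mul (x + σ • z) x

lemma abs_add_smul_sub_fderiv_le (hφ : IsC11With K φ) {x : E} (hx : φ x = 0) (σ : ℝ) (z : E) :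
    |φ (x + σ • z) - σ * fderiv ℝ φ x z| ≤ K * σ ^ 2 * ‖z‖ ^ 2 := by
  simpa [norm_smul, mul_pow, mul_assoc, hx] using hφ.abs_sub_sub_fderiv_le x (σ • z)

lemma abs_exp_add_smul_sub_quadratic_le (hφ : IsC11With K φ) {x : E} (hx : φ x = 0) {σ : ℝ}
    (hσ : σ ∈ Set.Icc (0 : ℝ) 1) (z : E) :
    |Real.exp (φ (x + σ • z)) - 1 - φ (x + σ • z) - (σ * fderiv ℝ φ x z) ^ 2 / 2|
      ≤ (K ^ 3 + K ^ 2) * σ ^ 3 * (‖z‖ ^ 3 * Real.exp (K * ‖z‖)) := by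
  have hσ₀ := hσ.1
  have hlinear : |σ * fderiv ℝ φ x z| ≤ K * σ * ‖z‖ := by
    rw [abs_mul, abs_of_nonneg hσ₀, mul_comm (K : ℝ), mul_assoc]
    exact mul_le_mul_of_nonneg_left
      ((fderiv ℝ φ x).le_of_opNorm_le (hφ.norm_fderiv_le x) z) hσ₀
  have hexp : Real.exp (K * σ * ‖z‖) ≤ Real.exp (K * ‖z‖) := by
    gcongr
    exact mul_le_of_le_one_right K.coe_nonneg hσ.2
  calc _ ≤ (K * σ * ‖z‖) ^ 3 * Real.exp (K * σ * ‖z‖) + K * σ * ‖z‖ * (K * σ ^ 2 * ‖z‖ ^ 2) :=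
        abs_exp_sub_quadratic_le_of_approx (by positivity)
          (hφ.abs_add_smul_le hx hσ₀ z) hlinear (hφ.abs_add_smul_sub_fderiv_le hx σ z)
    _ = K ^ 3 * σ ^ 3 * (‖z‖ ^ 3 * Real.exp (K * σ * ‖z‖)) + K ^ 2 * σ ^ 3 * (‖z‖ ^ 3 * 1) := by
        ring
    _ ≤ K ^ 3 * σ ^ 3 * (‖z‖ ^ 3 * Real.exp (K * ‖z‖))
        + K ^ 2 * σ ^ 3 * (‖z‖ ^ 3 * Real.exp (K * ‖z‖)) := by
        gcongr
        exact Real.one_le_exp (by positivity)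
    _ = (K ^ 3 + K ^ 2) * σ ^ 3 * (‖z‖ ^ 3 * Real.exp (K * ‖z‖)) := by ring

end IsC11With

lemma exists_isC11With_of_hasCompactSupport_sub {u : E → ℝ} {a : ℝ} (hu : ContDiff ℝ 2 u)
    (hsupp : HasCompactSupport fun x => u x - a) : ∃ K, IsC11With K u := by
  obtain ⟨K₀, hK₀⟩ := (hu.sub contDiff_const).lipschitzWith_of_hasCompactSupport hsupp two_ne_zero
  have hfderiv : fderiv ℝ (fun x => u x - a) = fderiv ℝ u := funext fun x => fderiv_sub_const a
  obtain ⟨K₁, hK₁⟩ := ContDiff.lipschitzWith_of_hasCompactSupport (hfderiv ▸ hsupp.fderiv ℝ)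
    (hu.fderiv_right (m := 1) (by norm_num)) one_ne_zero
  refine ⟨max K₀ K₁, hu.differentiable two_ne_zero, ?_, hK₁.weaken (le_max_right _ _)⟩
  exact LipschitzWith.of_dist_le_mul fun x y => by
    simpa using (hK₀.weaken (le_max_left K₀ K₁)).dist_le_mul x y

end C11

section Datum

variable {ι E : Type*} [Fintype ι] {F : ι → Type*}
  [NormedAddCommGroup E] [InnerProductSpace ℝ E] [FiniteDimensional ℝ E]
  [∀ i, NormedAddCommGroup (F i)] [∀ i, InnerProductSpace ℝ (F i)] [∀ i, FiniteDimensional ℝ (F i)]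

/-- A geometric Brascamp–Lieb datum: nonnegative weights `c i` and linear maps `B i` satisfying the
frame condition. Zero weights are allowed. -/
structure IsGeometricDatum (c : ι → ℝ) (B : ∀ i, E →L[ℝ] F i) : Prop where
  nonneg : ∀ i, 0 ≤ c i
  comp_adjoint : ∀ i, B i ∘L (B i)† = ContinuousLinearMap.id ℝ (F i)
  sum_adjoint_comp : ∑ i, c i • ((B i)† ∘L B i) = ContinuousLinearMap.id ℝ E

lemma norm_adjoint_apply {G : Type*} [NormedAddCommGroup G] [InnerProductSpace ℝ G]
    [FiniteDimensional ℝ G] {b : E →L[ℝ] G} (hb : b ∘L b† = ContinuousLinearMap.id ℝ G) (w : G) :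
    ‖(b†) w‖ = ‖w‖ := by
  rw [← sq_eq_sq₀ (norm_nonneg _) (norm_nonneg _), ← real_inner_self_eq_norm_sq,
    ← real_inner_self_eq_norm_sq, ContinuousLinearMap.adjoint_inner_left,
    ← ContinuousLinearMap.comp_apply, hb, ContinuousLinearMap.id_apply]

lemma norm_le_one_of_comp_adjoint {G : Type*} [NormedAddCommGroup G] [InnerProductSpace ℝ G]
    [FiniteDimensional ℝ G] {b : E →L[ℝ] G} (hb : b ∘L b† = ContinuousLinearMap.id ℝ G) :
    ‖b‖ ≤ 1 := by
  rw [← ContinuousLinearMap.adjoint.norm_map b]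
  exact ContinuousLinearMap.opNorm_le_bound _ zero_le_one fun w => by
    rw [norm_adjoint_apply hb, one_mul]

namespace IsGeometricDatum

variable {c : ι → ℝ} {B : ∀ i, E →L[ℝ] F i}

lemma norm_le_one (h : IsGeometricDatum c B) (i : ι) : ‖B i‖ ≤ 1 :=
  norm_le_one_of_comp_adjoint (h.comp_adjoint i)

lemma sum_mul_norm_sq (h : IsGeometricDatum c B) (x : E) : ∑ i, c i * ‖B i x‖ ^ 2 = ‖x‖ ^ 2 := by
  have hinner := congrArg (fun T : E →L[ℝ] E => inner ℝ (T x) x) h.sum_adjoint_comp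
  simpa [sum_inner, real_inner_smul_left, ContinuousLinearMap.adjoint_inner_left] using hinner

/-- Dual to the frame identity by Cauchy–Schwarz. Applied to derivatives, this is what makes the
Brascamp–Lieb product increase along the heat flow. -/
lemma norm_sum_smul_comp_sq_le (h : IsGeometricDatum c B) (L : ∀ i, StrongDual ℝ (F i)) :
    ‖∑ i, c i • (L i).comp (B i)‖ ^ 2 ≤ ∑ i, c i * ‖L i‖ ^ 2 := by
  have hnonneg : 0 ≤ ∑ i, c i * ‖L i‖ ^ 2 :=
    Finset.sum_nonneg fun i _ => mul_nonneg (h.nonneg i) (sq_nonneg _)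
  rw [← Real.le_sqrt (norm_nonneg _) hnonneg]
  refine ContinuousLinearMap.opNorm_le_bound _ (Real.sqrt_nonneg _) fun x => ?_
  rw [← Real.sqrt_sq (norm_nonneg x), ← Real.sqrt_mul hnonneg]
  refine Real.le_sqrt_of_sq_le ?_
  calc ‖(∑ i, c i • (L i).comp (B i)) x‖ ^ 2
      ≤ (∑ i, c i * (‖L i‖ * ‖B i x‖)) ^ 2 := by
        simp only [_root_.sum_apply, _root_.smul_apply,
          ContinuousLinearMap.comp_apply]
        gcongr
        refine norm_sum_le_of_le _ fun i _ => ?_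
        rw [norm_smul, Real.norm_of_nonneg (h.nonneg i)]
        exact mul_le_mul_of_nonneg_left ((L i).le_opNorm _) (h.nonneg i)
    _ ≤ (∑ i, c i * ‖L i‖ ^ 2) * ∑ i, c i * ‖B i x‖ ^ 2 :=
        Finset.sum_sq_le_sum_mul_sum_of_sq_le_mul _
          (fun i _ => mul_nonneg (h.nonneg i) (sq_nonneg _))
          (fun i _ => mul_nonneg (h.nonneg i) (sq_nonneg _)) fun i _ => by
            exact le_of_eq (by ring)
    _ = (∑ i, c i * ‖L i‖ ^ 2) * ‖x‖ ^ 2 := by rw [h.sum_mul_norm_sq]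

lemma sum_mul_finrank (h : IsGeometricDatum c B) :
    ∑ i, c i * Module.finrank ℝ (F i) = Module.finrank ℝ E := by
  have htrace : ∀ i, LinearMap.trace ℝ E (((B i)† ∘L B i : E →L[ℝ] E) : E →ₗ[ℝ] E)
      = Module.finrank ℝ (F i) := fun i => by
    rw [ContinuousLinearMap.toLinearMap_comp, LinearMap.trace_comp_comm',
      ← ContinuousLinearMap.toLinearMap_comp, h.comp_adjoint]
    exact LinearMap.trace_id ℝ (F i)
  have hsum := congrArg (fun T : E →L[ℝ] E => LinearMap.trace ℝ E T) h.sum_adjoint_comp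
  simpa [← htrace] using hsum

end IsGeometricDatum

end Datum

section Integrability

variable {E : Type*} [NormedAddCommGroup E] [NormedSpace ℝ E] [CompleteSpace E]
  [SecondCountableTopology E] [MeasurableSpace E] [BorelSpace E] (μ : Measure E) [IsGaussian μ]

lemma integrable_exp_mul_norm (K : ℝ) : Integrable (fun z => Real.exp (K * ‖z‖)) μ := by
  obtain ⟨C, hC, hint⟩ := IsGaussian.exists_integrable_exp_sq μ
  refine (hint.const_mul (Real.exp (K ^ 2 / (4 * C)))).mono' (by fun_prop)
    (Eventually.of_forall fun z => ?_)
  rw [Real.norm_of_nonneg (Real.exp_pos _).le, ← Real.exp_add, Real.exp_le_exp]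
  have hsq : K ^ 2 / (4 * C) + C * ‖z‖ ^ 2 - K * ‖z‖ = (K - 2 * C * ‖z‖) ^ 2 / (4 * C) := by
    field_simp
    ring
  linarith [div_nonneg (sq_nonneg (K - 2 * C * ‖z‖)) (by positivity : 0 ≤ 4 * C)]

lemma integrable_norm_pow_mul_exp_mul_norm (k : ℕ) (K : ℝ) :
    Integrable (fun z => ‖z‖ ^ k * Real.exp (K * ‖z‖)) μ := by
  refine ((integrable_exp_mul_norm μ (K + 1)).const_mul (k.factorial : ℝ)).mono' (by fun_prop)
    (Eventually.of_forall fun z => ?_)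
  have hpow := (div_le_iff₀' (by positivity)).1
    (Real.pow_div_factorial_le_exp ‖z‖ (norm_nonneg z) k)
  rw [Real.norm_of_nonneg (by positivity), add_mul, one_mul, add_comm (K * ‖z‖), Real.exp_add,
    ← mul_assoc]
  gcongr

variable {μ} {K : ℝ≥0} {u : E → ℝ}

lemma integrable_exp_of_lipschitzWith (hu : LipschitzWith K u) :
    Integrable (fun z => Real.exp (u z)) μ := by
  refine ((integrable_exp_mul_norm μ K).const_mul (Real.exp (u 0))).mono'
    (hu.continuous.rexp.aestronglyMeasurable) (Eventually.of_forall fun z => ?_)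
  rw [Real.norm_of_nonneg (Real.exp_pos _).le, ← Real.exp_add, Real.exp_le_exp]
  have hdist := hu.dist_le_mul z 0
  rw [dist_zero_right, Real.dist_eq] at hdist
  linarith [le_abs_self (u z - u 0)]

lemma integrable_of_lipschitzWith (hu : LipschitzWith K u) : Integrable u μ := by
  refine ((integrable_exp_of_lipschitzWith (μ := μ) hu).add
    (integrable_exp_of_lipschitzWith hu.neg)).mono' hu.continuous.aestronglyMeasurable
    (Eventually.of_forall fun z => abs_le.2 ⟨?_, ?_⟩)
  all_goals
    simp only [Pi.add_apply, Pi.neg_apply]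
    linarith [Real.add_one_le_exp (u z), Real.add_one_le_exp (-u z), Real.exp_pos (u z),
      Real.exp_pos (-u z)]

end Integrability

lemma lipschitzWith_integral {α X G : Type*} [MeasurableSpace α] {μ : Measure α}
    [IsProbabilityMeasure μ] [PseudoMetricSpace X] [NormedAddCommGroup G] [NormedSpace ℝ G]
    {K : ℝ≥0} {f : X → α → G} (hint : ∀ x, Integrable (f x) μ)
    (hf : ∀ a, LipschitzWith K fun x => f x a) : LipschitzWith K fun x => ∫ a, f x a ∂μ := by
  refine LipschitzWith.of_dist_le_mul fun x y => ?_
  rw [dist_eq_norm, ← integral_sub (hint x) (hint y)]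
  simpa using norm_integral_le_of_norm_le_const (μ := μ) (C := K * dist x y)
    (Eventually.of_forall fun a => by
      simpa only [dist_eq_norm] using (hf a).dist_le_mul x y)

section GaussianAverage

variable {E : Type*} [NormedAddCommGroup E] [InnerProductSpace ℝ E] [FiniteDimensional ℝ E]
  [MeasurableSpace E] [BorelSpace E]

lemma integral_strongDual_sq_stdGaussian (L : StrongDual ℝ E) :
    ∫ z, L z ^ 2 ∂stdGaussian E = ‖L‖ ^ 2 := by
  rw [← variance_dual_stdGaussian,
    variance_of_integral_eq_zero (by fun_prop) (integral_strongDual_stdGaussian L)]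

lemma measurePreserving_stdGaussian {F : Type*} [NormedAddCommGroup F] [InnerProductSpace ℝ F]
    [FiniteDimensional ℝ F] [MeasurableSpace F] [BorelSpace F] {b : E →L[ℝ] F}
    (hb : b ∘L b† = ContinuousLinearMap.id ℝ F) :
    MeasurePreserving b (stdGaussian E) (stdGaussian F) := by
  have : IsProbabilityMeasure ((stdGaussian E).map b) :=
    Measure.isProbabilityMeasure_map (by fun_prop)
  refine ⟨by fun_prop, Measure.ext_of_charFun (funext fun t => ?_)⟩
  calc charFun ((stdGaussian E).map b) t = charFun (stdGaussian E) ((b†) t) := by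
        rw [charFun_apply, charFun_apply, integral_map (by fun_prop) (by fun_prop)]
        simp_rw [ContinuousLinearMap.adjoint_inner_right]
    _ = charFun (stdGaussian F) t := by
        rw [charFun_stdGaussian, charFun_stdGaussian, norm_adjoint_apply hb]

lemma map_smul_stdGaussian_conv {ρ σ τ : ℝ} (h : ρ ^ 2 = σ ^ 2 + τ ^ 2) :
    (stdGaussian E).map (σ • ·) ∗ (stdGaussian E).map (τ • ·) = (stdGaussian E).map (ρ • ·) := by
  have (s : ℝ) : IsProbabilityMeasure ((stdGaussian E).map (s • ·)) :=
    Measure.isProbabilityMeasure_map (by fun_prop)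
  refine Measure.ext_of_charFun (funext fun t => ?_)
  rw [charFun_conv]
  simp only [charFun_map_smul, charFun_stdGaussian, ← Complex.exp_add]
  congr 1
  have hnorm : ‖ρ • t‖ ^ 2 = ‖σ • t‖ ^ 2 + ‖τ • t‖ ^ 2 := by
    simp only [norm_smul, mul_pow, Real.norm_eq_abs, sq_abs, h, add_mul]
  rw [← Complex.ofReal_pow, ← Complex.ofReal_pow, ← Complex.ofReal_pow, hnorm, Complex.ofReal_add]
  ring

/-- The heat semigroup at time `σ ^ 2 / 2`: the average of `u` against the Gaussian measure with
mean `x` and covariance `σ ^ 2`. -/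
noncomputable def gaussianAverage (σ : ℝ) (u : E → ℝ) (x : E) : ℝ :=
  ∫ z, u (x + σ • z) ∂stdGaussian E

lemma gaussianAverage_comp {F : Type*} [NormedAddCommGroup F] [InnerProductSpace ℝ F]
    [FiniteDimensional ℝ F] [MeasurableSpace F] [BorelSpace F] {b : E →L[ℝ] F}
    (hb : b ∘L b† = ContinuousLinearMap.id ℝ F) (σ : ℝ) {u : F → ℝ} (hu : Measurable u) (x : E) :
    gaussianAverage σ (fun y => u (b y)) x = gaussianAverage σ u (b x) := by
  have hb' := measurePreserving_stdGaussian hb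
  simp only [gaussianAverage, map_add, map_smul]
  rw [← hb'.map_eq, integral_map hb'.aemeasurable]
  exact (hu.comp (by fun_prop)).aestronglyMeasurable

lemma gaussianAverage_gaussianAverage {ρ σ τ : ℝ} (h : ρ ^ 2 = σ ^ 2 + τ ^ 2) {u : E → ℝ}
    (hu : Measurable u) {x : E} (hint : Integrable (fun z => u (x + ρ • z)) (stdGaussian E)) :
    gaussianAverage σ (gaussianAverage τ u) x = gaussianAverage ρ u x := by
  have hux : Measurable fun y => u (x + y) := hu.comp (measurable_const_add x)
  have hmap : ∀ s : ℝ, AEMeasurable (s • · : E → E) (stdGaussian E) := fun s => by fun_prop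
  have hsfinite : ∀ s : ℝ, SFinite ((stdGaussian E).map (s • ·)) := fun s => inferInstance
  calc gaussianAverage σ (gaussianAverage τ u) x
      = ∫ w, ∫ z, u (x + (w + z)) ∂(stdGaussian E).map (τ • ·) ∂(stdGaussian E).map (σ • ·) := by
        rw [integral_map (hmap σ)]
        · refine integral_congr_ae (Eventually.of_forall fun w => ?_)
          simp only [gaussianAverage, add_assoc]
          exact (integral_map (hmap τ)
            (hux.comp (measurable_const_add _)).aestronglyMeasurable).symm
        · exact (hux.comp measurable_add).stronglyMeasurable.integral_prod_right'
            |>.aestronglyMeasurable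
    _ = ∫ y, u (x + y) ∂(stdGaussian E).map (ρ • ·) := by
        rw [← map_smul_stdGaussian_conv h, integral_conv]
        rw [map_smul_stdGaussian_conv h]
        exact (integrable_map_measure hux.aestronglyMeasurable (hmap ρ)).2 hint
    _ = gaussianAverage ρ u x := integral_map (hmap ρ) hux.aestronglyMeasurable

namespace IsC11With

variable {K : ℝ≥0} {u φ : E → ℝ}

lemma integrable_add_smul (hu : IsC11With K u) (σ : ℝ) (x : E) :
    Integrable (fun z => u (x + σ • z)) (stdGaussian E) :=
  integrable_of_lipschitzWith (hu.lipschitzWith.comp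
    ((isometry_add_left x).lipschitz.comp (lipschitzWith_smul σ)))

lemma integrable_exp_add_smul (hφ : IsC11With K φ) (σ : ℝ) (x : E) :
    Integrable (fun z => Real.exp (φ (x + σ • z))) (stdGaussian E) :=
  integrable_exp_of_lipschitzWith (hφ.lipschitzWith.comp
    ((isometry_add_left x).lipschitz.comp (lipschitzWith_smul σ)))

lemma le_gaussianAverage {δ : ℝ} (hu : IsC11With K u) (hlow : ∀ x, δ ≤ u x) (σ : ℝ) (x : E) :
    δ ≤ gaussianAverage σ u x := by
  have hmono := integral_mono (integrable_const δ) (hu.integrable_add_smul σ x)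
    fun z => hlow (x + σ • z)
  rwa [integral_const, probReal_univ, one_smul] at hmono

protected lemma gaussianAverage (hu : IsC11With K u) (σ : ℝ) :
    IsC11With K (gaussianAverage σ u) := by
  have hmeas : ∀ x, AEStronglyMeasurable (fun z => fderiv ℝ u (x + σ • z)) (stdGaussian E) :=
    fun x => (hu.lipschitzWith_fderiv.continuous.comp (by fun_prop)).aestronglyMeasurable
  have hasFDerivAt : ∀ x, HasFDerivAt (gaussianAverage σ u)
      (∫ z, fderiv ℝ u (x + σ • z) ∂stdGaussian E) x := fun x =>
    hasFDerivAt_integral_of_dominated_of_fderiv_le (bound := fun _ => (K : ℝ)) univ_mem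
      (Eventually.of_forall fun y => (hu.integrable_add_smul σ y).aestronglyMeasurable)
      (F' := fun y z => fderiv ℝ u (y + σ • z)) (hu.integrable_add_smul σ x) (hmeas x)
      (Eventually.of_forall fun z y _ => hu.norm_fderiv_le _) (integrable_const _)
      (Eventually.of_forall fun z y _ =>
        (hasFDerivAt_comp_add_right (σ • z)).2 (hu.differentiable _).hasFDerivAt)
  have hshift : ∀ z : E, LipschitzWith 1 fun x => x + σ • z := fun z =>
    (isometry_add_right (σ • z)).lipschitz
  refine ⟨fun x => (hasFDerivAt x).differentiableAt,
    lipschitzWith_integral (hu.integrable_add_smul σ) fun z => ?_, ?_⟩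
  · exact mul_one K ▸ hu.lipschitzWith.comp (hshift z)
  · rw [funext fun x => (hasFDerivAt x).fderiv]
    refine lipschitzWith_integral (fun x => Integrable.of_bound (hmeas x) K
      (Eventually.of_forall fun z => hu.norm_fderiv_le _)) fun z => ?_
    exact mul_one K ▸ hu.lipschitzWith_fderiv.comp (hshift z)

-- The linear term of the Taylor expansion has mean zero.
lemma abs_gaussianAverage_le (hφ : IsC11With K φ) {x : E} (hx : φ x = 0) (σ : ℝ) :
    |gaussianAverage σ φ x| ≤ K * σ ^ 2 * ∫ z, ‖z‖ ^ 2 ∂stdGaussian E := by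
  have hL : Integrable (fun z => σ * fderiv ℝ φ x z) (stdGaussian E) :=
    (integrable_of_lipschitzWith (fderiv ℝ φ x).lipschitz).const_mul σ
  have hsq : Integrable (fun z => ‖z‖ ^ 2) (stdGaussian E) := by
    simpa using integrable_norm_pow_mul_exp_mul_norm (stdGaussian E) 2 0
  have hmean : gaussianAverage σ φ x
      = ∫ z, (φ (x + σ • z) - σ * fderiv ℝ φ x z) ∂stdGaussian E := by
    rw [integral_sub (hφ.integrable_add_smul σ x) hL, integral_const_mul,
      integral_strongDual_stdGaussian, mul_zero, sub_zero, gaussianAverage]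
  rw [hmean, ← integral_const_mul, ← Real.norm_eq_abs]
  exact norm_integral_le_of_norm_le (hsq.const_mul _)
    (Eventually.of_forall fun z => hφ.abs_add_smul_sub_fderiv_le hx σ z)

lemma abs_gaussianAverage_exp_sub_quadratic_le (hφ : IsC11With K φ) {x : E} (hx : φ x = 0) {σ : ℝ}
    (hσ : σ ∈ Set.Icc (0 : ℝ) 1) :
    |gaussianAverage σ (fun y => Real.exp (φ y)) x - 1 - gaussianAverage σ φ x
        - σ ^ 2 / 2 * ‖fderiv ℝ φ x‖ ^ 2|
      ≤ (K ^ 3 + K ^ 2) * σ ^ 3 * ∫ z, ‖z‖ ^ 3 * Real.exp (K * ‖z‖) ∂stdGaussian E := by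
  have hexp := (hφ.integrable_exp_add_smul σ x).sub (integrable_const (1 : ℝ))
  have hint := hφ.integrable_add_smul σ x
  have hsq : Integrable (fun z => (σ * fderiv ℝ φ x z) ^ 2 / 2) (stdGaussian E) := by
    simp_rw [mul_pow]
    exact ((IsGaussian.memLp_dual _ (fderiv ℝ φ x) 2 (by simp)).integrable_sq.const_mul
      _).div_const _
  have hmean : gaussianAverage σ (fun y => Real.exp (φ y)) x - 1 - gaussianAverage σ φ x
        - σ ^ 2 / 2 * ‖fderiv ℝ φ x‖ ^ 2
      = ∫ z, (Real.exp (φ (x + σ • z)) - 1 - φ (x + σ • z)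
          - (σ * fderiv ℝ φ x z) ^ 2 / 2) ∂stdGaussian E := by
    rw [integral_sub (by exact hexp.sub hint) hsq, integral_sub (by exact hexp) hint,
      integral_sub (hφ.integrable_exp_add_smul σ x) (integrable_const _), integral_div]
    simp only [mul_pow, integral_const_mul, integral_strongDual_sq_stdGaussian, integral_const,
      probReal_univ, one_smul, gaussianAverage]
    ring
  rw [hmean, ← integral_const_mul, ← Real.norm_eq_abs]
  exact norm_integral_le_of_norm_le
    ((integrable_norm_pow_mul_exp_mul_norm (stdGaussian E) 3 K).const_mul _)
    (Eventually.of_forall fun z => hφ.abs_exp_add_smul_sub_quadratic_le hx hσ z)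

lemma integral_exp_neg_le_gaussianAverage_exp (hφ : IsC11With K φ) {x : E} (hx : φ x = 0) {σ : ℝ}
    (hσ : σ ∈ Set.Icc (0 : ℝ) 1) :
    ∫ z, Real.exp (-K * ‖z‖) ∂stdGaussian E ≤ gaussianAverage σ (fun y => Real.exp (φ y)) x := by
  refine integral_mono (integrable_exp_mul_norm _ _) (hφ.integrable_exp_add_smul σ x)
    fun z => Real.exp_le_exp.2 ?_
  have hlow := neg_le_of_abs_le (hφ.abs_add_smul_le hx hσ.1 z)
  have hσK : K * σ * ‖z‖ ≤ K * ‖z‖ := by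
    gcongr
    exact mul_le_of_le_one_right K.coe_nonneg hσ.2
  linarith

lemma gaussianAverage_sub_const (hu : IsC11With K u) (σ a : ℝ) (x : E) :
    gaussianAverage σ (fun y => u y - a) x = gaussianAverage σ u x - a := by
  simp [gaussianAverage, integral_sub (hu.integrable_add_smul σ x) (integrable_const a)]

lemma log_gaussianAverage_exp_sub_const (hφ : IsC11With K φ) (σ a : ℝ) (x : E) :
    Real.log (gaussianAverage σ (fun y => Real.exp (φ y - a)) x)
      = Real.log (gaussianAverage σ (fun y => Real.exp (φ y)) x) - a := by
  simp only [gaussianAverage, Real.exp_sub, integral_div]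
  rw [Real.log_div (integral_exp_pos (hφ.integrable_exp_add_smul σ x)).ne' (Real.exp_ne_zero a),
    Real.log_exp]

end IsC11With

lemma exists_abs_log_gaussianAverage_exp_sub_le (K : ℝ≥0) :
    ∃ C, ∀ φ : E → ℝ, IsC11With K φ → ∀ σ ∈ Set.Icc (0 : ℝ) 1, ∀ x,
      |Real.log (gaussianAverage σ (fun y => Real.exp (φ y)) x)
        - (gaussianAverage σ φ x + σ ^ 2 / 2 * ‖fderiv ℝ φ x‖ ^ 2)| ≤ C * σ ^ 3 := by
  set κ := ∫ z, Real.exp (-K * ‖z‖) ∂stdGaussian E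
  set m := ∫ z, ‖z‖ ^ 2 ∂stdGaussian E
  set M := (K ^ 3 + K ^ 2) * ∫ z, ‖z‖ ^ 3 * Real.exp (K * ‖z‖) ∂stdGaussian E
  have hκ : 0 < κ := integral_exp_pos (integrable_exp_mul_norm _ _)
  have hM : 0 ≤ M := by positivity
  have normalized : ∀ φ : E → ℝ, IsC11With K φ → ∀ σ ∈ Set.Icc (0 : ℝ) 1, ∀ x, φ x = 0 →
      |Real.log (gaussianAverage σ (fun y => Real.exp (φ y)) x)
        - (gaussianAverage σ φ x + σ ^ 2 / 2 * ‖fderiv ℝ φ x‖ ^ 2)|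
      ≤ (M + (K * m + K ^ 2 / 2 + M) ^ 2 / κ) * σ ^ 3 := by
    intro φ hφ σ hσ x hx
    refine abs_log_sub_le_cubic hκ hM hσ (hφ.integral_exp_neg_le_gaussianAverage_exp hx hσ) ?_ ?_
    · calc |gaussianAverage σ φ x + σ ^ 2 / 2 * ‖fderiv ℝ φ x‖ ^ 2|
          ≤ |gaussianAverage σ φ x| + σ ^ 2 / 2 * ‖fderiv ℝ φ x‖ ^ 2 :=
            (abs_add_le _ _).trans_eq (by rw [abs_of_nonneg (by positivity : 0 ≤ σ ^ 2 / 2 * _)])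
        _ ≤ K * σ ^ 2 * m + σ ^ 2 / 2 * K ^ 2 := by
            gcongr
            exacts [hφ.abs_gaussianAverage_le hx σ, hφ.norm_fderiv_le x]
        _ = (K * m + K ^ 2 / 2) * σ ^ 2 := by ring
    · rw [← sub_sub, mul_right_comm]
      exact hφ.abs_gaussianAverage_exp_sub_quadratic_le hx hσ
  refine ⟨M + (K * m + K ^ 2 / 2 + M) ^ 2 / κ, fun φ hφ σ hσ x => ?_⟩
  have h := normalized _ (hφ.sub_const (φ x)) σ hσ x (sub_self _)
  rw [hφ.gaussianAverage_sub_const, hφ.log_gaussianAverage_exp_sub_const, fderiv_sub_const] at h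
  convert h using 2
  ring

end GaussianAverage

section Product

variable {ι E : Type*} [Fintype ι] {F : ι → Type*} [NormedAddCommGroup E] [NormedSpace ℝ E]
  [∀ i, NormedAddCommGroup (F i)] [∀ i, NormedSpace ℝ (F i)]

/-- The integrand `∏ᵢ uᵢ(Bᵢ x)^{cᵢ}` of the Brascamp–Lieb inequality. -/
noncomputable def brascampLiebProduct (c : ι → ℝ) (B : ∀ i, E →L[ℝ] F i) (u : ∀ i, F i → ℝ)
    (x : E) : ℝ :=
  ∏ i, u i (B i x) ^ c i

variable {c : ι → ℝ} {B : ∀ i, E →L[ℝ] F i} {u : ∀ i, F i → ℝ}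

lemma brascampLiebProduct_nonneg (hu : ∀ i y, 0 ≤ u i y) (x : E) :
    0 ≤ brascampLiebProduct c B u x :=
  Finset.prod_nonneg fun i _ => Real.rpow_nonneg (hu i _) _

lemma brascampLiebProduct_eq_exp (hu : ∀ i y, 0 < u i y) :
    brascampLiebProduct c B u = fun x => Real.exp (∑ i, c i * Real.log (u i (B i x))) := by
  funext x
  rw [Real.exp_sum]
  exact Finset.prod_congr rfl fun i _ => by rw [Real.rpow_def_of_pos (hu i _), mul_comm]

end Product

section HeatFlow

variable {ι E : Type*} [Fintype ι] {F : ι → Type*}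
  [NormedAddCommGroup E] [InnerProductSpace ℝ E] [FiniteDimensional ℝ E]
  [∀ i, NormedAddCommGroup (F i)] [∀ i, InnerProductSpace ℝ (F i)] [∀ i, FiniteDimensional ℝ (F i)]

variable {c : ι → ℝ} {B : ∀ i, E →L[ℝ] F i} {u : ∀ i, F i → ℝ} {K δ : ℝ≥0}

lemma isC11With_sum_log (h : IsGeometricDatum c B) (hδ : 0 < δ) (hu : ∀ i, IsC11With K (u i))
    (hlow : ∀ i y, δ ≤ u i y) :
    IsC11With (∑ i, ‖c i‖₊ * (K / δ + (K / δ) ^ 2))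
      fun x => ∑ i, c i * Real.log (u i (B i x)) :=
  IsC11With.sum_mul_comp c h.norm_le_one fun i => (hu i).log hδ (hlow i)

variable [MeasurableSpace E] [BorelSpace E]

lemma integrable_brascampLiebProduct_add_smul (h : IsGeometricDatum c B) (hδ : 0 < δ)
    (hu : ∀ i, IsC11With K (u i)) (hlow : ∀ i y, δ ≤ u i y) (σ : ℝ) (x : E) :
    Integrable (fun z => brascampLiebProduct c B u (x + σ • z)) (stdGaussian E) := by
  rw [brascampLiebProduct_eq_exp fun i y => (NNReal.coe_pos.2 hδ).trans_le (hlow i y)]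
  exact (isC11With_sum_log h hδ hu hlow).integrable_exp_add_smul σ x

variable [∀ i, MeasurableSpace (F i)] [∀ i, BorelSpace (F i)]

lemma gaussianAverage_sum_mul_comp (h : IsGeometricDatum c B) {φ : ∀ i, F i → ℝ}
    (hφ : ∀ i, IsC11With K (φ i)) (σ : ℝ) (x : E) :
    gaussianAverage σ (fun y => ∑ i, c i * φ i (B i y)) x
      = ∑ i, c i * gaussianAverage σ (φ i) (B i x) := by
  have hterm : ∀ i, Integrable (fun z => φ i (B i (x + σ • z))) (stdGaussian E) := fun i => by
    have hcomp := (measurePreserving_stdGaussian (h.comp_adjoint i)).integrable_comp_of_integrable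
      ((hφ i).integrable_add_smul σ (B i x))
    simpa only [Function.comp_def, map_add, map_smul] using hcomp
  calc gaussianAverage σ (fun y => ∑ i, c i * φ i (B i y)) x
      = ∑ i, c i * gaussianAverage σ (fun y => φ i (B i y)) x := by
        simp only [gaussianAverage]
        rw [integral_finsetSum _ fun i _ => (hterm i).const_mul (c i)]
        simp only [integral_const_mul]
    _ = ∑ i, c i * gaussianAverage σ (φ i) (B i x) := by
        simp only [fun i => gaussianAverage_comp (h.comp_adjoint i) σ
          (hφ i).lipschitzWith.continuous.measurable x]

lemma exists_log_gaussianAverage_exp_sum_le (h : IsGeometricDatum c B) (K : ℝ≥0) :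
    ∃ C, ∀ φ : ∀ i, F i → ℝ, (∀ i, IsC11With K (φ i)) → ∀ σ ∈ Set.Icc (0 : ℝ) 1, ∀ x,
      Real.log (gaussianAverage σ (fun y => Real.exp (∑ i, c i * φ i (B i y))) x)
        ≤ C * σ ^ 3
          + ∑ i, c i * Real.log (gaussianAverage σ (fun y => Real.exp (φ i y)) (B i x)) := by
  obtain ⟨C₀, hC₀⟩ := exists_abs_log_gaussianAverage_exp_sub_le (E := E) (∑ i, ‖c i‖₊ * K)
  choose C hC using fun i => exists_abs_log_gaussianAverage_exp_sub_le (E := F i) K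
  refine ⟨C₀ + ∑ i, c i * C i, fun φ hφ σ hσ x => ?_⟩
  have hsum := (abs_sub_le_iff.1
    (hC₀ _ (IsC11With.sum_mul_comp c h.norm_le_one hφ) σ hσ x)).1
  rw [gaussianAverage_sum_mul_comp h hφ,
    (hasFDerivAt_sum_mul_comp c B (fun i => (hφ i).differentiable) x).fderiv] at hsum
  have hfactor := fun i => (abs_sub_le_iff.1 (hC i _ (hφ i) σ hσ (B i x))).2
  calc Real.log (gaussianAverage σ (fun y => Real.exp (∑ i, c i * φ i (B i y))) x)
      ≤ C₀ * σ ^ 3 + (∑ i, c i * gaussianAverage σ (φ i) (B i x)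
          + σ ^ 2 / 2 * ∑ i, c i * ‖fderiv ℝ (φ i) (B i x)‖ ^ 2) := by
        refine (sub_le_iff_le_add.1 hsum).trans ?_
        gcongr
        exact h.norm_sum_smul_comp_sq_le _
    _ = C₀ * σ ^ 3 + ∑ i, c i * (gaussianAverage σ (φ i) (B i x)
          + σ ^ 2 / 2 * ‖fderiv ℝ (φ i) (B i x)‖ ^ 2) := by
        simp only [mul_add, Finset.sum_add_distrib, Finset.mul_sum, mul_left_comm]
    _ ≤ C₀ * σ ^ 3 + ∑ i, c i * (C i * σ ^ 3
          + Real.log (gaussianAverage σ (fun y => Real.exp (φ i y)) (B i x))) :=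
        add_le_add le_rfl (Finset.sum_le_sum fun i _ =>
          mul_le_mul_of_nonneg_left (sub_le_iff_le_add.1 (hfactor i)) (h.nonneg i))
    _ = (C₀ + ∑ i, c i * C i) * σ ^ 3
          + ∑ i, c i * Real.log (gaussianAverage σ (fun y => Real.exp (φ i y)) (B i x)) := by
        simp only [mul_add, Finset.sum_add_distrib, add_mul, Finset.sum_mul, mul_assoc, add_assoc]

-- The error is still negligible after `σ ^ (-2)` steps.
lemma exists_gaussianAverage_brascampLiebProduct_le (h : IsGeometricDatum c B)
    (K : ℝ≥0) (hδ : 0 < δ) :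
    ∃ C, ∀ u : ∀ i, F i → ℝ, (∀ i, IsC11With K (u i)) → (∀ i y, δ ≤ u i y) →
      ∀ σ ∈ Set.Icc (0 : ℝ) 1, ∀ x, gaussianAverage σ (brascampLiebProduct c B u) x
        ≤ Real.exp (C * σ ^ 3) * brascampLiebProduct c B (fun i => gaussianAverage σ (u i)) x := by
  obtain ⟨C, hC⟩ := exists_log_gaussianAverage_exp_sum_le h (K / δ + (K / δ) ^ 2)
  refine ⟨C, fun u hu hlow σ hσ x => ?_⟩
  have hpos : ∀ i y, 0 < u i y := fun i y => (NNReal.coe_pos.2 hδ).trans_le (hlow i y)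
  have hpos' : ∀ i y, 0 < gaussianAverage σ (u i) y := fun i y =>
    (NNReal.coe_pos.2 hδ).trans_le ((hu i).le_gaussianAverage (hlow i) σ y)
  have hA : 0 < gaussianAverage σ (brascampLiebProduct c B u) x := by
    rw [brascampLiebProduct_eq_exp hpos]
    exact integral_exp_pos ((isC11With_sum_log h hδ hu hlow).integrable_exp_add_smul σ x)
  have hlog := hC _ (fun i => (hu i).log hδ (hlow i)) σ hσ x
  simp only [Real.exp_log (hpos _ _), ← brascampLiebProduct_eq_exp hpos] at hlog
  rw [brascampLiebProduct_eq_exp hpos', ← Real.exp_add]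
  exact (Real.log_le_iff_le_exp hA).1 hlog

lemma gaussianAverage_iterate_brascampLiebProduct_le (h : IsGeometricDatum c B) (hδ : 0 < δ)
    {C σ : ℝ} (hstep : ∀ u : ∀ i, F i → ℝ, (∀ i, IsC11With K (u i)) → (∀ i y, δ ≤ u i y) →
      ∀ x, gaussianAverage σ (brascampLiebProduct c B u) x
        ≤ Real.exp (C * σ ^ 3) * brascampLiebProduct c B (fun i => gaussianAverage σ (u i)) x)
    (hu : ∀ i, IsC11With K (u i)) (hlow : ∀ i y, δ ≤ u i y) (k : ℕ) (x : E) :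
    gaussianAverage (√k * σ) (brascampLiebProduct c B u) x
      ≤ Real.exp (C * σ ^ 3) ^ k
        * brascampLiebProduct c B (fun i => gaussianAverage (√k * σ) (u i)) x := by
  induction k generalizing x with
  | zero => simp [gaussianAverage, brascampLiebProduct]
  | succ k ih =>
    have hvariance : (√(k + 1 : ℕ) * σ) ^ 2 = σ ^ 2 + (√k * σ) ^ 2 := by
      rw [mul_pow, mul_pow, Real.sq_sqrt (by positivity), Real.sq_sqrt (by positivity)]
      push_cast
      ring
    have hpos : ∀ i y, 0 < u i y := fun i y => (NNReal.coe_pos.2 hδ).trans_le (hlow i y)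
    have hmeas : Measurable (brascampLiebProduct c B u) := by
      rw [brascampLiebProduct_eq_exp hpos]
      exact (isC11With_sum_log h hδ hu hlow).lipschitzWith.continuous.rexp.measurable
    have hu' := fun i => (hu i).gaussianAverage (√k * σ)
    have hlow' := fun i => (hu i).le_gaussianAverage (hlow i) (√k * σ)
    calc gaussianAverage (√(k + 1 : ℕ) * σ) (brascampLiebProduct c B u) x
        = gaussianAverage σ (gaussianAverage (√k * σ) (brascampLiebProduct c B u)) x :=
          (gaussianAverage_gaussianAverage hvariance hmeas
            (integrable_brascampLiebProduct_add_smul h hδ hu hlow _ x)).symm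
      _ ≤ gaussianAverage σ (fun y => Real.exp (C * σ ^ 3) ^ k *
            brascampLiebProduct c B (fun i => gaussianAverage (√k * σ) (u i)) y) x :=
          integral_mono_of_nonneg
            (Eventually.of_forall fun z => integral_nonneg fun w =>
              brascampLiebProduct_nonneg (fun i y => (hpos i y).le) _)
            ((integrable_brascampLiebProduct_add_smul h hδ hu' hlow' σ x).const_mul _)
            (Eventually.of_forall fun z => ih (x + σ • z))
      _ = Real.exp (C * σ ^ 3) ^ k * gaussianAverage σ
            (brascampLiebProduct c B fun i => gaussianAverage (√k * σ) (u i)) x :=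
          integral_const_mul _ _
      _ ≤ Real.exp (C * σ ^ 3) ^ k * (Real.exp (C * σ ^ 3) * brascampLiebProduct c B
            (fun i => gaussianAverage σ (gaussianAverage (√k * σ) (u i))) x) :=
          mul_le_mul_of_nonneg_left (hstep _ hu' hlow' x) (by positivity)
      _ = Real.exp (C * σ ^ 3) ^ (k + 1) * brascampLiebProduct c B
            (fun i => gaussianAverage (√(k + 1 : ℕ) * σ) (u i)) x := by
          simp only [fun i => funext fun y => gaussianAverage_gaussianAverage hvariance
            (hu i).lipschitzWith.continuous.measurable ((hu i).integrable_add_smul _ y)]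
          ring

lemma integral_brascampLiebProduct_le_of_isC11With (h : IsGeometricDatum c B) (hδ : 0 < δ)
    (hu : ∀ i, IsC11With K (u i)) (hlow : ∀ i y, δ ≤ u i y) :
    ∫ x, brascampLiebProduct c B u x ∂stdGaussian E
      ≤ ∏ i, (∫ y, u i y ∂stdGaussian (F i)) ^ c i := by
  obtain ⟨C, hC⟩ := exists_gaussianAverage_brascampLiebProduct_le h K hδ
  have hN : ∀ N : ℕ, ∫ x, brascampLiebProduct c B u x ∂stdGaussian E
      ≤ Real.exp (C * (√(N + 1 : ℕ))⁻¹) * ∏ i, (∫ y, u i y ∂stdGaussian (F i)) ^ c i := by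
    intro N
    set k := N + 1
    have hk : (0 : ℝ) < √(k : ℕ) := Real.sqrt_pos.2 (by positivity)
    have hσ : (√(k : ℕ))⁻¹ ∈ Set.Icc (0 : ℝ) 1 :=
      ⟨by positivity, inv_le_one_of_one_le₀ (Real.one_le_sqrt.2 (by simp [k]))⟩
    have hiterate := gaussianAverage_iterate_brascampLiebProduct_le h hδ
      (fun u hu hlow x => hC u hu hlow _ hσ x) hu hlow k 0
    have hexponent : (k : ℝ) * (C * (√(k : ℕ))⁻¹ ^ 3) = C * (√(k : ℕ))⁻¹ := by
      field_simp
      rw [Real.sq_sqrt (by positivity), mul_comm]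
    rw [← Real.exp_nat_mul, hexponent] at hiterate
    simpa [gaussianAverage, mul_inv_cancel₀ hk.ne', brascampLiebProduct] using hiterate
  have hlim : Tendsto (fun N : ℕ => Real.exp (C * (√(N + 1 : ℕ))⁻¹)
      * ∏ i, (∫ y, u i y ∂stdGaussian (F i)) ^ c i) atTop
      (𝓝 (∏ i, (∫ y, u i y ∂stdGaussian (F i)) ^ c i)) := by
    have hinv : Tendsto (fun N : ℕ => (√(N + 1 : ℕ))⁻¹) atTop (𝓝 0) :=
      tendsto_inv_atTop_zero.comp (Real.tendsto_sqrt_atTop.comp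
        (tendsto_natCast_atTop_atTop.comp (tendsto_add_atTop_nat 1)))
    simpa using ((Real.continuous_exp.tendsto _).comp (hinv.const_mul C)).mul_const
      (∏ i, (∫ y, u i y ∂stdGaussian (F i)) ^ c i)
  exact ge_of_tendsto' hlim hN

end HeatFlow

section Density

lemma integrable_and_integral_le_of_tendsto {α : Type*} [MeasurableSpace α] {μ : Measure α}
    {G : ℕ → α → ℝ} {f : α → ℝ} {a : ℕ → ℝ} {A : ℝ} (hG : ∀ n, Integrable (G n) μ)
    (hG_nonneg : ∀ n, 0 ≤ᵐ[μ] G n)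
    (hlim : ∀ᵐ x ∂μ, Tendsto (fun n => G n x) atTop (𝓝 (f x)))
    (hle : ∀ n, ∫ x, G n x ∂μ ≤ a n) (ha : Tendsto a atTop (𝓝 A)) :
    Integrable f μ ∧ ∫ x, f x ∂μ ≤ A := by
  have hmeas := aestronglyMeasurable_of_tendsto_ae atTop (fun n => (hG n).aestronglyMeasurable) hlim
  have hf_nonneg : 0 ≤ᵐ[μ] f := by
    filter_upwards [hlim, ae_all_iff.2 hG_nonneg] with x hx hGx using ge_of_tendsto' hx hGx
  have hA : 0 ≤ A :=
    ge_of_tendsto' ha fun n => (integral_nonneg_of_ae (hG_nonneg n)).trans (hle n)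
  have hfatou : ∫⁻ x, ENNReal.ofReal (f x) ∂μ ≤ ENNReal.ofReal A :=
    calc ∫⁻ x, ENNReal.ofReal (f x) ∂μ
        = ∫⁻ x, liminf (fun n => ENNReal.ofReal (G n x)) atTop ∂μ :=
          lintegral_congr_ae (hlim.mono fun x hx => (ENNReal.tendsto_ofReal hx).liminf_eq.symm)
      _ ≤ liminf (fun n => ∫⁻ x, ENNReal.ofReal (G n x) ∂μ) atTop :=
          lintegral_liminf_le' fun n => (hG n).aemeasurable.ennreal_ofReal
      _ ≤ liminf (fun n => ENNReal.ofReal (a n)) atTop :=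
          liminf_le_liminf (Eventually.of_forall fun n => by
            rw [← ofReal_integral_eq_lintegral_ofReal (hG n) (hG_nonneg n)]
            exact ENNReal.ofReal_le_ofReal (hle n))
      _ = ENNReal.ofReal A := (ENNReal.tendsto_ofReal ha).liminf_eq
  refine ⟨(lintegral_ofReal_ne_top_iff_integrable hmeas hf_nonneg).1
    (hfatou.trans_lt ENNReal.ofReal_lt_top).ne, ?_⟩
  rw [integral_eq_lintegral_of_nonneg_ae hf_nonneg hmeas]
  exact ENNReal.toReal_le_of_le_ofReal hA hfatou

variable {F : Type*} [NormedAddCommGroup F] [NormedSpace ℝ F] [FiniteDimensional ℝ F]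
  [MeasurableSpace F] [BorelSpace F] {μ : Measure F} [IsFiniteMeasure μ] {g : F → ℝ}

lemma exists_isC11With_eLpNorm_sub_le (hg : Integrable g μ) (hg_nonneg : ∀ y, 0 ≤ g y) {ε : ℝ≥0}
    (hε : 0 < ε) :
    ∃ u : F → ℝ, (∃ K, IsC11With K u) ∧ (∀ y, ε ≤ u y) ∧ Integrable u μ ∧
      eLpNorm (u - g) 1 μ ≤ ε * (1 + μ Set.univ) := by
  obtain ⟨φ, hφ_supp, hφ_smooth, hφ⟩ :=
    (memLp_one_iff_integrable.2 hg).exist_eLpNorm_sub_le (by simp) le_rfl (NNReal.coe_pos.2 hε)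
  have hsmooth : ContDiff ℝ ∞ fun y => √(φ y ^ 2 + ε ^ 2) :=
    ((hφ_smooth.pow 2).add contDiff_const).sqrt fun y => by positivity
  have hsupp : HasCompactSupport fun y => √(φ y ^ 2 + ε ^ 2) - ε :=
    hφ_supp.comp_left (g := fun t : ℝ => √(t ^ 2 + ε ^ 2) - ε) (by simp)
  have hφ_integrable : Integrable φ μ :=
    hφ_smooth.continuous.integrable_of_hasCompactSupport hφ_supp
  have hintegrable : Integrable (fun y => √(φ y ^ 2 + ε ^ 2)) μ := by
    refine (((hsmooth.continuous.sub continuous_const).integrable_of_hasCompactSupport hsupp).add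
      (integrable_const (ε : ℝ))).congr (Eventually.of_forall fun y => ?_)
    simp
  refine ⟨_, exists_isC11With_of_hasCompactSupport_sub (contDiff_infty.1 hsmooth 2) hsupp,
    fun y => Real.le_sqrt_of_sq_le (by nlinarith [sq_nonneg (φ y)]), hintegrable, ?_⟩
  calc eLpNorm ((fun y => √(φ y ^ 2 + ε ^ 2)) - g) 1 μ
      ≤ eLpNorm ((fun y => |(φ - g) y|) + fun _ => (ε : ℝ)) 1 μ :=
        eLpNorm_mono_real fun y => abs_sqrt_sq_add_sq_sub_le (hg_nonneg y) ε.2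
    _ ≤ eLpNorm (fun y => |(φ - g) y|) 1 μ + eLpNorm (fun _ => (ε : ℝ)) 1 μ :=
        eLpNorm_add_le (hφ_integrable.sub hg).abs.aestronglyMeasurable (by fun_prop) le_rfl
    _ ≤ ε + ε * μ Set.univ := by
        gcongr
        · rw [show (fun y => |(φ - g) y|) = fun y => ‖(φ - g) y‖ from rfl, eLpNorm_norm,
            eLpNorm_sub_comm]
          simpa using hφ
        · rw [eLpNorm_one_eq_lintegral_enorm, lintegral_const]
          simp
    _ = ε * (1 + μ Set.univ) := by ring

lemma exists_seq_isC11With_tendsto (hg : Integrable g μ) (hg_nonneg : ∀ y, 0 ≤ g y) :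
    ∃ u : ℕ → F → ℝ, (∀ n, ∃ K, IsC11With K (u n)) ∧ (∀ n, ∃ δ : ℝ≥0, 0 < δ ∧ ∀ y, δ ≤ u n y) ∧
      (∀ᵐ y ∂μ, Tendsto (fun n => u n y) atTop (𝓝 (g y))) ∧
      Tendsto (fun n => ∫ y, u n y ∂μ) atTop (𝓝 (∫ y, g y ∂μ)) := by
  have hε : ∀ n : ℕ, (0 : ℝ≥0) < 1 / (n + 1) := fun n => by positivity
  choose u hC11 hlow hint hu using fun n => exists_isC11With_eLpNorm_sub_le hg hg_nonneg (hε n)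
  have hL1 : Tendsto (fun n => eLpNorm (u n - g) 1 μ) atTop (𝓝 0) := by
    have hbound : Tendsto (fun n : ℕ => ((1 / (n + 1) : ℝ≥0) : ℝ≥0∞) * (1 + μ Set.univ)) atTop
        (𝓝 0) := by
      simpa using ENNReal.Tendsto.mul_const
        (ENNReal.tendsto_coe.2 (tendsto_one_div_add_atTop_nhds_zero_nat (𝕜 := ℝ≥0)))
        (Or.inr (ENNReal.add_ne_top.2 ⟨ENNReal.one_ne_top, measure_ne_top μ _⟩))
    exact tendsto_of_tendsto_of_tendsto_of_le_of_le tendsto_const_nhds hbound (fun _ => zero_le) hu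
  obtain ⟨ns, hns, hae⟩ := (tendstoInMeasure_of_tendsto_eLpNorm one_ne_zero
    (fun n => (hint n).aestronglyMeasurable) hg.aestronglyMeasurable hL1).exists_seq_tendsto_ae
  exact ⟨fun n => u (ns n), fun n => hC11 _, fun n => ⟨_, hε _, hlow _⟩, hae,
    tendsto_integral_of_L1' g hg.aestronglyMeasurable (Eventually.of_forall fun n => hint _)
      (hL1.comp hns.tendsto_atTop)⟩

end Density

section Gaussian

variable {ι E : Type*} [Fintype ι] {F : ι → Type*}
  [NormedAddCommGroup E] [InnerProductSpace ℝ E] [FiniteDimensional ℝ E]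
  [MeasurableSpace E] [BorelSpace E]
  [∀ i, NormedAddCommGroup (F i)] [∀ i, InnerProductSpace ℝ (F i)] [∀ i, FiniteDimensional ℝ (F i)]
  [∀ i, MeasurableSpace (F i)] [∀ i, BorelSpace (F i)]
  {c : ι → ℝ} {B : ∀ i, E →L[ℝ] F i}

theorem integrable_and_integral_brascampLiebProduct_stdGaussian_le (h : IsGeometricDatum c B)
    {g : ∀ i, F i → ℝ} (hg_nonneg : ∀ i y, 0 ≤ g i y)
    (hg : ∀ i, Integrable (g i) (stdGaussian (F i))) :
    Integrable (brascampLiebProduct c B g) (stdGaussian E) ∧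
      ∫ x, brascampLiebProduct c B g x ∂stdGaussian E
        ≤ ∏ i, (∫ y, g i y ∂stdGaussian (F i)) ^ c i := by
  choose u hC11 hlow hae hint using fun i => exists_seq_isC11With_tendsto (hg i) (hg_nonneg i)
  choose K hK using hC11
  choose δ hδ hlow using hlow
  choose K' hK' using fun n => Finite.exists_le fun i => K i n
  choose δ' hδ' using fun n => Finite.exists_ge fun i => (⟨δ i n, hδ i n⟩ : Set.Ioi (0 : ℝ≥0))
  have hu : ∀ n i, IsC11With (K' n) (u i n) := fun n i => (hK i n).mono (hK' n i)
  have hδu : ∀ n i y, (δ' n : ℝ≥0) ≤ u i n y := fun n i y =>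
    (NNReal.coe_le_coe.2 (hδ' n i)).trans (hlow i n y)
  refine integrable_and_integral_le_of_tendsto
    (G := fun n => brascampLiebProduct c B fun i => u i n)
    (fun n => ?_)
    (fun n => Eventually.of_forall <|
      brascampLiebProduct_nonneg fun i y => (NNReal.coe_nonneg _).trans (hδu n i y))
    ?_
    (fun n => integral_brascampLiebProduct_le_of_isC11With h (δ' n).2 (hu n) (hδu n))
    (tendsto_finsetProd _ fun i _ => (hint i).rpow_const (Or.inr (h.nonneg i)))
  · simpa using integrable_brascampLiebProduct_add_smul h (δ' n).2 (hu n) (hδu n) 1 0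
  · filter_upwards [ae_all_iff.2 fun i => (measurePreserving_stdGaussian
      (h.comp_adjoint i)).quasiMeasurePreserving.ae (hae i)] with x hx
    exact tendsto_finsetProd _ fun i _ => (hx i).rpow_const (Or.inr (h.nonneg i))

end Gaussian

section GaussianDensity

variable (E : Type*) [NormedAddCommGroup E] [InnerProductSpace ℝ E]

/-- The density `(2π)^(-dim E / 2) exp(-‖x‖² / 2)` of the standard Gaussian measure of `E`. -/
noncomputable def gaussianDensity (x : E) : ℝ :=
  (2 * Real.pi) ^ (-(Module.finrank ℝ E / 2) : ℝ) * Real.exp (-‖x‖ ^ 2 / 2)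

variable {E}

lemma gaussianDensity_pos (x : E) : 0 < gaussianDensity E x :=
  mul_pos (by positivity) (Real.exp_pos _)

@[fun_prop]
lemma continuous_gaussianDensity : Continuous (gaussianDensity E) := by
  unfold gaussianDensity
  fun_prop

variable [FiniteDimensional ℝ E] [MeasurableSpace E] [BorelSpace E]

lemma integrable_gaussianDensity : Integrable (gaussianDensity E) := by
  have hexp := (GaussianFourier.integrable_cexp_neg_mul_sq_norm_add (V := E) (b := 1 / 2)
    (by norm_num) 0 0).norm.const_mul ((2 * Real.pi) ^ (-(Module.finrank ℝ E / 2) : ℝ))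
  refine hexp.congr (Eventually.of_forall fun x => ?_)
  have hexponent : -(1 / 2) * (‖x‖ : ℂ) ^ 2 + 0 * (inner ℝ 0 x : ℝ) = (-‖x‖ ^ 2 / 2 : ℝ) := by
    push_cast
    ring
  beta_reduce
  rw [hexponent, Complex.norm_exp_ofReal, gaussianDensity]

lemma charFun_withDensity_gaussianDensity (t : E) :
    charFun (volume.withDensity fun x => ENNReal.ofReal (gaussianDensity E x)) t
      = Complex.exp (-‖t‖ ^ 2 / 2) := by
  have hnormalization : ((2 * Real.pi) ^ (-(Module.finrank ℝ E / 2) : ℝ) : ℝ)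
      * (Real.pi / (1 / 2) : ℂ) ^ (Module.finrank ℝ E / 2 : ℂ) = 1 := by
    have hbase : (Real.pi / (1 / 2) : ℂ) = ((2 * Real.pi : ℝ) : ℂ) := by push_cast; ring
    have hexponent : (Module.finrank ℝ E / 2 : ℂ) = ((Module.finrank ℝ E / 2 : ℝ) : ℂ) := by simp
    rw [hbase, hexponent, ← Complex.ofReal_cpow Real.two_pi_pos.le, ← Complex.ofReal_mul,
      ← Real.rpow_add Real.two_pi_pos, neg_add_cancel, Real.rpow_zero, Complex.ofReal_one]
  calc charFun (volume.withDensity fun x => ENNReal.ofReal (gaussianDensity E x)) t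
      = ∫ x, gaussianDensity E x • Complex.exp (inner ℝ x t * Complex.I) := by
        rw [charFun_apply, integral_withDensity_eq_integral_toReal_smul (by fun_prop) (by simp)]
        simp only [ENNReal.toReal_ofReal (gaussianDensity_pos _).le]
    _ = ∫ x, ((2 * Real.pi) ^ (-(Module.finrank ℝ E / 2) : ℝ) : ℝ)
          * Complex.exp (-(1 / 2) * ‖x‖ ^ 2 + Complex.I * inner ℝ t x) := by
        refine integral_congr_ae (Eventually.of_forall fun x => ?_)
        simp only [gaussianDensity, Complex.real_smul, Complex.ofReal_mul, Complex.ofReal_exp,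
          mul_assoc, ← Complex.exp_add, real_inner_comm]
        congr 2
        push_cast
        ring
    _ = Complex.exp (-‖t‖ ^ 2 / 2) := by
        rw [integral_const_mul, GaussianFourier.integral_cexp_neg_mul_sq_norm_add (by norm_num),
          ← mul_assoc, hnormalization, one_mul, Complex.I_sq]
        congr 1
        ring

lemma stdGaussian_eq_withDensity :
    stdGaussian E = volume.withDensity fun x => ENNReal.ofReal (gaussianDensity E x) := by
  have : IsFiniteMeasure (volume.withDensity fun x => ENNReal.ofReal (gaussianDensity E x)) :=
    isFiniteMeasure_withDensity_ofReal integrable_gaussianDensity.hasFiniteIntegral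
  exact Measure.ext_of_charFun (funext fun t => by
    rw [charFun_stdGaussian, charFun_withDensity_gaussianDensity])

lemma integrable_stdGaussian_iff {f : E → ℝ} :
    Integrable f (stdGaussian E) ↔ Integrable fun x => gaussianDensity E x * f x := by
  rw [stdGaussian_eq_withDensity,
    integrable_withDensity_iff_integrable_smul' (by fun_prop) (by simp)]
  simp only [ENNReal.toReal_ofReal (gaussianDensity_pos _).le, smul_eq_mul]

lemma integral_stdGaussian (f : E → ℝ) :
    ∫ x, f x ∂stdGaussian E = ∫ x, gaussianDensity E x * f x := by
  rw [stdGaussian_eq_withDensity,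
    integral_withDensity_eq_integral_toReal_smul (by fun_prop) (by simp)]
  simp only [ENNReal.toReal_ofReal (gaussianDensity_pos _).le, smul_eq_mul]

end GaussianDensity

section Lebesgue

variable {ι E : Type*} [Fintype ι] {F : ι → Type*}
  [NormedAddCommGroup E] [InnerProductSpace ℝ E] [FiniteDimensional ℝ E]
  [∀ i, NormedAddCommGroup (F i)] [∀ i, InnerProductSpace ℝ (F i)] [∀ i, FiniteDimensional ℝ (F i)]
  {c : ι → ℝ} {B : ∀ i, E →L[ℝ] F i}

lemma brascampLiebProduct_gaussianDensity (h : IsGeometricDatum c B) (x : E) :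
    brascampLiebProduct c B (fun i => gaussianDensity (F i)) x = gaussianDensity E x := by
  have hconst : ∏ i, ((2 * Real.pi) ^ (-(Module.finrank ℝ (F i) / 2) : ℝ)) ^ c i
      = (2 * Real.pi) ^ (-(Module.finrank ℝ E / 2) : ℝ) := by
    simp_rw [← Real.rpow_mul Real.two_pi_pos.le, ← h.sum_mul_finrank]
    rw [← Real.rpow_sum_of_pos Real.two_pi_pos, Finset.sum_div, ← Finset.sum_neg_distrib]
    exact congrArg _ (Finset.sum_congr rfl fun i _ => by ring)
  have hexp : ∏ i, Real.exp (-‖B i x‖ ^ 2 / 2) ^ c i = Real.exp (-‖x‖ ^ 2 / 2) := by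
    simp_rw [← Real.exp_mul, ← h.sum_mul_norm_sq x]
    rw [← Real.exp_sum, ← Finset.sum_neg_distrib, Finset.sum_div]
    exact congrArg _ (Finset.sum_congr rfl fun i _ => by ring)
  simp only [brascampLiebProduct, gaussianDensity, Real.mul_rpow
    (Real.rpow_nonneg Real.two_pi_pos.le _) (Real.exp_pos _).le, Finset.prod_mul_distrib,
    hconst, hexp]

lemma gaussianDensity_mul_brascampLiebProduct_div (h : IsGeometricDatum c B) {f : ∀ i, F i → ℝ}
    (hf : ∀ i y, 0 ≤ f i y) (x : E) :
    gaussianDensity E x * brascampLiebProduct c B (fun i y => f i y / gaussianDensity (F i) y) x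
      = brascampLiebProduct c B f x := by
  rw [← brascampLiebProduct_gaussianDensity h x]
  simp only [brascampLiebProduct, ← Finset.prod_mul_distrib]
  refine Finset.prod_congr rfl fun i _ => ?_
  have hpos := gaussianDensity_pos (B i x)
  rw [← Real.mul_rpow hpos.le (div_nonneg (hf i _) hpos.le), mul_div_cancel₀ _ hpos.ne']

end Lebesgue

section Matrix

variable {ι n : Type*} [Fintype ι] [Fintype n] {κ : ι → Type*} [∀ i, Fintype (κ i)]

lemma integral_comp_ofLp (f : (n → ℝ) → ℝ) :
    ∫ x : EuclideanSpace ℝ n, f x.ofLp = ∫ x, f x :=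
  (EuclideanSpace.volume_preserving_symm_measurableEquiv_toLp n).integral_comp' f

lemma integrable_comp_ofLp {f : (n → ℝ) → ℝ} (hf : Integrable f) :
    Integrable fun x : EuclideanSpace ℝ n => f x.ofLp :=
  (EuclideanSpace.volume_preserving_symm_measurableEquiv_toLp n).integrable_comp_of_integrable hf

variable [DecidableEq n] [∀ i, DecidableEq (κ i)]

lemma adjoint_toEuclideanLin {κ : Type*} [Fintype κ] [DecidableEq κ] (M : Matrix κ n ℝ) :
    (Matrix.toEuclideanLin M).toContinuousLinearMap†
      = (Matrix.toEuclideanLin Mᵀ).toContinuousLinearMap := by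
  rw [← LinearMap.adjoint_toContinuousLinearMap, ← Matrix.toEuclideanLin_conjTranspose_eq_adjoint,
    conjTranspose_eq_transpose_of_trivial]

lemma isGeometricDatum_toEuclideanLin {c : ι → ℝ} (hc : ∀ i, 0 ≤ c i)
    {B : ∀ i, Matrix (κ i) n ℝ} (hB : ∀ i, B i * (B i)ᵀ = 1)
    (hsum : ∑ i, c i • ((B i)ᵀ * B i) = 1) :
    IsGeometricDatum c fun i => (Matrix.toEuclideanLin (B i)).toContinuousLinearMap where
  nonneg := hc
  comp_adjoint i := by
    ext1 x
    have hx := congrArg (fun M : Matrix (κ i) (κ i) ℝ => Matrix.toEuclideanLin M x) (hB i)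
    simpa [adjoint_toEuclideanLin, Matrix.toLpLin_mul_same] using hx
  sum_adjoint_comp := by
    ext1 x
    have hx := congrArg (fun M : Matrix n n ℝ => Matrix.toEuclideanLin M x) hsum
    simpa [adjoint_toEuclideanLin, Matrix.toLpLin_mul_same] using hx

end Matrix

end BrascampLieb

open BrascampLieb in
theorem brascamp_lieb_frame_condition_general {ι E : Type*} [Fintype ι] {F : ι → Type*}
    [NormedAddCommGroup E] [InnerProductSpace ℝ E] [FiniteDimensional ℝ E]
    [MeasurableSpace E] [BorelSpace E]
    [∀ i, NormedAddCommGroup (F i)] [∀ i, InnerProductSpace ℝ (F i)]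
    [∀ i, FiniteDimensional ℝ (F i)] [∀ i, MeasurableSpace (F i)] [∀ i, BorelSpace (F i)]
    {c : ι → ℝ} {B : ∀ i, E →L[ℝ] F i} (h : IsGeometricDatum c B)
    {f : ∀ i, F i → ℝ} (hf0 : ∀ i y, 0 ≤ f i y) (hfint : ∀ i, Integrable (f i)) :
    Integrable (fun x => ∏ i, f i (B i x) ^ c i) ∧
      ∫ x, ∏ i, f i (B i x) ^ c i ≤ ∏ i, (∫ y, f i y) ^ c i := by
  have hdiv : ∀ i y, gaussianDensity (F i) y * (f i y / gaussianDensity (F i) y) = f i y :=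
    fun i y => mul_div_cancel₀ _ (gaussianDensity_pos y).ne'
  have hgauss := integrable_and_integral_brascampLiebProduct_stdGaussian_le h
    (fun i y => div_nonneg (hf0 i y) (gaussianDensity_pos y).le)
    (fun i => by simpa only [integrable_stdGaussian_iff, hdiv] using hfint i)
  simp only [integrable_stdGaussian_iff, integral_stdGaussian, hdiv,
    gaussianDensity_mul_brascampLiebProduct_div h hf0] at hgauss
  exact hgauss

/-- **Brascamp–Lieb inequality under the frame condition** (geometric case).
If `Bᵢ Bᵢ* = id` for every `i` and `∑ cᵢ Bᵢ* Bᵢ = id`, then the Brascamp–Lieb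
inequality holds with constant `1`. -/
theorem brascamp_lieb_frame_condition
    (m n : ℕ) (ni : Fin m → ℕ) (c : Fin m → ℝ) (hc : ∀ i, 0 < c i)
    (B : ∀ i, Matrix (Fin (ni i)) (Fin n) ℝ)
    (hB : ∀ i, Function.Surjective (B i).mulVec)
    (hframe1 : ∀ i, B i * (B i)ᵀ = (1 : Matrix (Fin (ni i)) (Fin (ni i)) ℝ))
    (hframe2 : ∑ i, c i • ((B i)ᵀ * B i) = (1 : Matrix (Fin n) (Fin n) ℝ))
    (f : ∀ i, (Fin (ni i) → ℝ) → ℝ)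
    (hf0 : ∀ i x, 0 ≤ f i x) (hfint : ∀ i, Integrable (f i)) :
    ∫ x : Fin n → ℝ, ∏ i, (f i ((B i).mulVec x)) ^ (c i) ≤
      ∏ i, (∫ y : Fin (ni i) → ℝ, f i y) ^ (c i) := by
  simp only [← BrascampLieb.integral_comp_ofLp]
  exact (brascamp_lieb_frame_condition_general
    (BrascampLieb.isGeometricDatum_toEuclideanLin (fun i => (hc i).le) hframe1 hframe2)
    (fun i _ => hf0 i _) fun i => BrascampLieb.integrable_comp_ofLp (hfint i)).2
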